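/- Let t be a closed normal λ-term and T a closed λ-term that is a storage operator for t. Then there exist constants A_{T,t} and B_{T,t} such that for every λ-term θ_t ≃β t, the number of head-reduction steps of (T)θ_t f satisfies n((T)θ_t f) ≤ A_{T,t}·N(θ_t) + B_{T,t}, where N(θ_t) is the number of steps of the left reduction from θ_t to its normal form. -/

import Mathlib

/- Pure untyped λ-calculus with de Bruijn indices. -/

inductive Lam : Type
  | var : ℕ → Lam
  | app : Lam → Lam → Lam
  | abs : Lam → Lam
  deriving DecidableEq

namespace Lam

/-- Renaming of free variables. -/
def rename (ρ : ℕ → ℕ) : Lam → Lam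
  | var i => var (ρ i)
  | app u v => app (u.rename ρ) (v.rename ρ)
  | abs u => abs (u.rename (fun i => match i with | 0 => 0 | j+1 => ρ j + 1))

/-- Lifting of a simultaneous substitution under a binder. -/
def liftSub (σ : ℕ → Lam) : ℕ → Lam
  | 0 => var 0
  | i+1 => (σ i).rename (· + 1)

/-- Simultaneous (capture-avoiding) substitution of the free variables. -/
def subst (σ : ℕ → Lam) : Lam → Lam
  | var i => σ i
  | app u v => app (u.subst σ) (v.subst σ)
  | abs u => abs (u.subst (liftSub σ))

/-- `u.subst0 v` is `u[v/x]` for the first variable. -/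
def subst0 (u v : Lam) : Lam :=
  u.subst (fun i => match i with | 0 => v | j+1 => var j)

/-- One step of β-reduction (anywhere in the term). -/
inductive Beta : Lam → Lam → Prop
  | beta (u v : Lam) : Beta (app (abs u) v) (u.subst0 v)
  | appL {u u'} (v) : Beta u u' → Beta (app u v) (app u' v)
  | appR (u) {v v'} : Beta v v' → Beta (app u v) (app u v')
  | abs {u u'} : Beta u u' → Beta (abs u) (abs u')

/-- β-equivalence `≃β`. -/
def BetaEq : Lam → Lam → Prop := Relation.EqvGen Beta

/-- A term is normal if it has no β-redex. -/
def Normal (t : Lam) : Prop := ∀ u, ¬ Beta t u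

def IsAbs : Lam → Prop
  | abs _ => True
  | _ => False

/-- One step of head reduction: reduction of the head redex. -/
inductive HeadStep : Lam → Lam → Prop
  | beta (u v) : HeadStep (app (abs u) v) (u.subst0 v)
  | appL {u u'} (v) : ¬ u.IsAbs → HeadStep u u' → HeadStep (app u v) (app u' v)
  | abs {u u'} : HeadStep u u' → HeadStep (abs u) (abs u')

/-- `HeadRedN n u v` : `u` head-reduces to `v` in exactly `n` steps (`u ≻ v` with `n(u,v) = n`). -/
inductive HeadRedN : ℕ → Lam → Lam → Prop
  | refl (u) : HeadRedN 0 u u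
  | step {n u v w} : HeadStep u v → HeadRedN n v w → HeadRedN (n+1) u w

/-- `u ≻ v` : `v` is obtained from `u` by some head reductions. -/
def HeadRed (u v : Lam) : Prop := ∃ n, HeadRedN n u v

/-- Head normal form. -/
def HeadNF (t : Lam) : Prop := ∀ u, ¬ HeadStep t u

def ClosedUnder : ℕ → Lam → Prop
  | k, var i => i < k
  | k, app u v => ClosedUnder k u ∧ ClosedUnder k v
  | k, abs u => ClosedUnder (k+1) u

/-- Closed λ-term. -/
def Closed (t : Lam) : Prop := ClosedUnder 0 t

/-- `(f)ⁿx` : `iterApp f n x = (f)(f)…(f)x`. -/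
def iterApp (f : Lam) : ℕ → Lam → Lam
  | 0, x => x
  | n+1, x => app f (iterApp f n x)

/-- The Church integer `n̲ = λxλf(f)ⁿx`. -/
def church (n : ℕ) : Lam := abs (abs (iterApp (var 0) n (var 1)))

/-- `(t)w₁…wₖ`. -/
def appList (t : Lam) (ws : List Lam) : Lam := ws.foldl app t

/-- `T` is a storage operator for the closed normal term `t` :
there is `τ ≃β t` such that for every `θ ≃β t` there is a substitution `σ`
(not touching the fresh variable `f`, represented by the de Bruijn index `0`)
with `(T)θf ≻ (f)σ(τ)`. -/
def IsStorageFor (T t : Lam) : Prop :=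
  Closed T ∧ ∃ τ, BetaEq τ t ∧ ∀ θ, BetaEq θ t →
    ∃ σ : ℕ → Lam, σ 0 = var 0 ∧
      HeadRed (app (app T θ) (var 0)) (app (var 0) (τ.subst σ))

end Lam

namespace Lam

/-- One step of left (leftmost, normal order) reduction. -/
inductive LeftStep : Lam → Lam → Prop
  | beta (u v) : LeftStep (app (abs u) v) (u.subst0 v)
  | abs {u u'} : LeftStep u u' → LeftStep (abs u) (abs u')
  | appL {u u'} (v) : ¬ u.IsAbs → LeftStep u u' → LeftStep (app u v) (app u' v)
  | appR (u) {v v'} : ¬ u.IsAbs → Normal u → LeftStep v v' → LeftStep (app u v) (app u v')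

/-- `LeftRedN n u v` : `u` left-reduces to `v` in exactly `n` steps. -/
inductive LeftRedN : ℕ → Lam → Lam → Prop
  | refl (u) : LeftRedN 0 u u
  | step {n u v w} : LeftStep u v → LeftRedN n v w → LeftRedN (n+1) u w

end Lam

/-!
Let `delay t` be `t` with an identity redex inserted in front of every subterm, and let `c` be the
number of head reduction steps of `(T)(delay t)f`. If `θ` left-reduces to `t` in `k` steps, the
head reduction of `(T)θf` is simulated by that of `(T)(delay t)f`: a copy of a subterm of `θ`
corresponds to the delayed copy of its normal form until it reaches head position. Firing the
identity redex there is matched by at most `k` weak head steps, which bring the copy into the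
outermost shape of its normal form, and its immediate subterms are again related in the same way.
Every other step is matched by exactly one step. Hence `(T)θf` needs at most `(k + 1) * c` steps.
-/

namespace Lam

/-! ### Substitution -/

/-- The extension of a renaming under a binder, as it occurs in `Lam.rename`. -/
def liftRen (ρ : ℕ → ℕ) : ℕ → ℕ
  | 0 => 0
  | j + 1 => ρ j + 1

/-- The substitution performed by `Lam.subst0`: it replaces the variable `0` by `v`. -/
def instSub (v : Lam) : ℕ → Lam
  | 0 => v
  | j + 1 => var j

theorem rename_abs (ρ : ℕ → ℕ) (u : Lam) : (abs u).rename ρ = abs (u.rename (liftRen ρ)) :=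
  rfl

theorem subst0_eq_subst (u v : Lam) : u.subst0 v = u.subst (instSub v) :=
  rfl

theorem rename_rename (u : Lam) (ρ ρ' : ℕ → ℕ) :
    (u.rename ρ).rename ρ' = u.rename (fun i => ρ' (ρ i)) := by
  induction u generalizing ρ ρ' with
  | var i => rfl
  | app u v hu hv => simp only [rename, hu, hv]
  | abs u hu =>
    simp only [rename_abs, hu]
    congr 2
    funext i
    cases i <;> rfl

theorem subst_rename (u : Lam) (ρ : ℕ → ℕ) (σ : ℕ → Lam) :
    (u.rename ρ).subst σ = u.subst (fun i => σ (ρ i)) := by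
  induction u generalizing ρ σ with
  | var i => rfl
  | app u v hu hv => simp only [rename, subst, hu, hv]
  | abs u hu =>
    simp only [rename_abs, subst, hu]
    congr 2
    funext i
    cases i <;> rfl

theorem rename_subst (u : Lam) (σ : ℕ → Lam) (ρ : ℕ → ℕ) :
    (u.subst σ).rename ρ = u.subst (fun i => (σ i).rename ρ) := by
  induction u generalizing σ ρ with
  | var i => rfl
  | app u v hu hv => simp only [rename, subst, hu, hv]
  | abs u hu =>
    simp only [rename_abs, subst, hu]
    congr 2
    funext i
    cases i with
    | zero => rfl
    | succ i => simp only [liftSub, rename_rename, liftRen]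

theorem subst_subst (u : Lam) (σ τ : ℕ → Lam) :
    (u.subst σ).subst τ = u.subst (fun i => (σ i).subst τ) := by
  induction u generalizing σ τ with
  | var i => rfl
  | app u v hu hv => simp only [subst, hu, hv]
  | abs u hu =>
    simp only [subst, hu]
    congr 2
    funext i
    cases i with
    | zero => rfl
    | succ i => simp only [liftSub, subst_rename, rename_subst]

theorem subst_var (u : Lam) : u.subst var = u := by
  induction u with
  | var i => rfl
  | app u v hu hv => rw [subst, hu, hv]
  | abs u hu =>
    have liftSub_var : liftSub var = var := by
      funext i
      cases i <;> rfl
    rw [subst, liftSub_var, hu]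

theorem rename_eq_subst (u : Lam) (ρ : ℕ → ℕ) : u.rename ρ = u.subst (fun i => var (ρ i)) := by
  simpa only [subst_var, rename] using rename_subst u var ρ

theorem subst_subst0 (u v : Lam) (σ : ℕ → Lam) :
    (u.subst0 v).subst σ = (u.subst (liftSub σ)).subst0 (v.subst σ) := by
  simp only [subst0_eq_subst, subst_subst]
  congr 1
  funext i
  cases i with
  | zero => rfl
  | succ i => simp only [liftSub, subst_rename, instSub, subst, subst_var]

theorem rename_subst0 (u v : Lam) (ρ : ℕ → ℕ) :
    (u.subst0 v).rename ρ = (u.rename (liftRen ρ)).subst0 (v.rename ρ) := by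
  rw [rename_eq_subst, subst_subst0, rename_eq_subst u, rename_eq_subst v]
  congr 2
  funext i
  cases i <;> rfl

theorem liftSub_rel {R : Lam → Lam → Prop} (var_zero : R (var 0) (var 0))
    (rename_succ : ∀ {u v}, R u v → R (u.rename (· + 1)) (v.rename (· + 1)))
    {σ τ : ℕ → Lam} (h : ∀ i, R (σ i) (τ i)) : ∀ i, R (liftSub σ i) (liftSub τ i)
  | 0 => var_zero
  | i + 1 => rename_succ (h i)

theorem instSub_rel {R : Lam → Lam → Prop} (var_rel : ∀ i, R (var i) (var i))
    {u v : Lam} (h : R u v) : ∀ i, R (instSub u i) (instSub v i)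
  | 0 => h
  | i + 1 => var_rel i

/-! ### Uniqueness of normal forms -/

/-- The complete development of a term: all its redexes are contracted simultaneously. -/
def develop : Lam → Lam
  | var i => var i
  | app (abs u) v => (develop u).subst0 (develop v)
  | app u v => app (develop u) (develop v)
  | abs u => abs (develop u)

/-- Parallel β-reduction: any set of redexes of the term is contracted simultaneously. Its diamond
property gives the confluence of β-reduction. -/
inductive Par : Lam → Lam → Prop
  | var (i) : Par (var i) (var i)
  | app {u u' v v'} : Par u u' → Par v v' → Par (app u v) (app u' v')
  | abs {u u'} : Par u u' → Par (abs u) (abs u')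
  | beta {u u' v v'} : Par u u' → Par v v' → Par (app (abs u) v) (u'.subst0 v')

namespace Par

protected theorem refl (u : Lam) : Par u u := by
  induction u with
  | var i => exact .var i
  | app _ _ hu hv => exact .app hu hv
  | abs _ hu => exact .abs hu

theorem of_beta {u v : Lam} (h : Beta u v) : Par u v := by
  induction h with
  | beta u v => exact .beta (.refl u) (.refl v)
  | appL v _ ih => exact .app ih (.refl v)
  | appR u _ ih => exact .app (.refl u) ih
  | abs _ ih => exact .abs ih

theorem rename {u v : Lam} (h : Par u v) (ρ : ℕ → ℕ) : Par (u.rename ρ) (v.rename ρ) := by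
  induction h generalizing ρ with
  | var i => exact .var _
  | app _ _ ihu ihv => exact .app (ihu ρ) (ihv ρ)
  | abs _ ih => simpa only [rename_abs] using .abs (ih _)
  | beta _ _ ihu ihv =>
    rw [rename_subst0, Lam.rename, rename_abs]
    exact .beta (ihu _) (ihv ρ)

theorem liftSub {σ τ : ℕ → Lam} (h : ∀ i, Par (σ i) (τ i)) (i : ℕ) :
    Par (Lam.liftSub σ i) (Lam.liftSub τ i) :=
  liftSub_rel (.var 0) (·.rename _) h i

theorem subst {u v : Lam} (h : Par u v) {σ τ : ℕ → Lam} (hσ : ∀ i, Par (σ i) (τ i)) :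
    Par (u.subst σ) (v.subst τ) := by
  induction h generalizing σ τ with
  | var i => exact hσ i
  | app _ _ ihu ihv => exact .app (ihu hσ) (ihv hσ)
  | abs _ ih => exact .abs (ih (liftSub hσ))
  | beta _ _ ihu ihv =>
    rw [subst_subst0]
    exact .beta (ihu (liftSub hσ)) (ihv hσ)

theorem subst0 {u u' v v' : Lam} (hu : Par u u') (hv : Par v v') :
    Par (u.subst0 v) (u'.subst0 v') := by
  simpa only [subst0_eq_subst] using hu.subst (instSub_rel .var hv)

theorem par_develop {u v : Lam} (h : Par u v) : Par v (develop u) := by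
  induction h with
  | var i => exact .var i
  | abs _ ih => exact .abs ih
  | beta _ _ ihu ihv => exact ihu.subst0 ihv
  | app hu _ ihu ihv =>
    cases hu with
    | abs _ =>
      cases ihu with
      | abs ihu => exact .beta ihu ihv
    | var _ => exact .app ihu ihv
    | app _ _ => exact .app ihu ihv
    | beta _ _ => exact .app ihu ihv

end Par

theorem BetaEq.join_par {u v : Lam} (h : BetaEq u v) :
    Relation.Join (Relation.ReflTransGen Par) u v := by
  have equivalence_join : Equivalence (Relation.Join (Relation.ReflTransGen Par)) :=
    Relation.equivalence_join_reflTransGen fun u _ _ huv huw =>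
      ⟨develop u, .single huv.par_develop, .single huw.par_develop⟩
  refine (equivalence_join.eqvGen_iff).1 (Relation.EqvGen.mono (fun u v h => ?_) u v h)
  exact ⟨v, .single (.of_beta h), .refl⟩

theorem IsAbs.exists_eq_abs : ∀ {u : Lam}, u.IsAbs → ∃ v, u = abs v
  | abs v, _ => ⟨v, rfl⟩

namespace Normal

theorem of_app_left {u v : Lam} (h : Normal (app u v)) : Normal u :=
  fun _ hu => h _ (.appL v hu)

theorem of_app_right {u v : Lam} (h : Normal (app u v)) : Normal v :=
  fun _ hv => h _ (.appR u hv)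

theorem of_abs {u : Lam} (h : Normal (abs u)) : Normal u :=
  fun _ hu => h _ (.abs hu)

theorem not_isAbs_of_app {u v : Lam} (h : Normal (app u v)) : ¬ u.IsAbs := by
  intro hu
  obtain ⟨w, rfl⟩ := hu.exists_eq_abs
  exact h _ (.beta w v)

theorem eq_of_par {u v : Lam} (hu : Normal u) (h : Par u v) : v = u := by
  induction h with
  | var i => rfl
  | app _ _ ihu ihv => rw [ihu hu.of_app_left, ihv hu.of_app_right]
  | abs _ ih => rw [ih hu.of_abs]
  | beta _ _ _ _ => exact absurd trivial hu.not_isAbs_of_app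

theorem eq_of_reflTransGen_par {u v : Lam} (hu : Normal u) (h : Relation.ReflTransGen Par u v) :
    v = u := by
  induction h with
  | refl => rfl
  | tail _ h ih => exact hu.eq_of_par (ih ▸ h)

theorem eq_of_betaEq {u v : Lam} (hu : Normal u) (hv : Normal v) (h : BetaEq u v) : u = v := by
  obtain ⟨w, huw, hvw⟩ := h.join_par
  rw [← hu.eq_of_reflTransGen_par huw, ← hv.eq_of_reflTransGen_par hvw]

end Normal

/-! ### Head reduction and weak head reduction -/

theorem headNF_var (i : ℕ) : HeadNF (var i) := nofun

theorem headNF_abs_iff {u : Lam} : HeadNF (abs u) ↔ HeadNF u :=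
  ⟨fun h _ hu => h _ (.abs hu), fun h _ hu => match hu with | .abs hu => h _ hu⟩

theorem headNF_app_iff {u v : Lam} : HeadNF (app u v) ↔ ¬ u.IsAbs ∧ HeadNF u := by
  constructor
  · intro h
    have not_isAbs : ¬ u.IsAbs := by
      intro hu
      obtain ⟨w, rfl⟩ := hu.exists_eq_abs
      exact h _ (.beta w v)
    exact ⟨not_isAbs, fun _ hu => h _ (.appL v not_isAbs hu)⟩
  · rintro ⟨not_isAbs, hu⟩ _ hstep
    cases hstep with
    | beta => exact not_isAbs trivial
    | appL _ _ hstep => exact hu _ hstep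

theorem HeadStep.unique {u v w : Lam} (hv : HeadStep u v) (hw : HeadStep u w) : v = w := by
  induction hv generalizing w with
  | beta u v =>
    cases hw with
    | beta => rfl
    | appL _ hu _ => exact absurd trivial hu
  | appL v hu _ ih =>
    cases hw with
    | beta => exact absurd trivial hu
    | appL _ _ hw => rw [ih hw]
  | abs _ ih =>
    cases hw with
    | abs hw => rw [ih hw]

namespace HeadRedN

theorem abs {n : ℕ} {u v : Lam} (h : HeadRedN n u v) : HeadRedN n (Lam.abs u) (Lam.abs v) := by
  induction h with
  | refl u => exact .refl _
  | step h _ ih => exact .step (.abs h) ih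

theorem trans {n m : ℕ} {u v w : Lam} (h : HeadRedN n u v) (h' : HeadRedN m v w) :
    HeadRedN (n + m) u w := by
  induction h with
  | refl u => rwa [Nat.zero_add]
  | step h _ ih =>
    rw [Nat.add_right_comm]
    exact .step h (ih h')

theorem length_unique {n m : ℕ} {u v w : Lam} (hv : HeadRedN n u v) (hv' : HeadNF v)
    (hw : HeadRedN m u w) (hw' : HeadNF w) : n = m := by
  induction hv generalizing m with
  | refl u =>
    cases hw with
    | refl => rfl
    | step h _ => exact absurd h (hv' _)
  | step h _ ih =>
    cases hw with
    | refl => exact absurd h (hw' _)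
    | step h' hw =>
      obtain rfl := h.unique h'
      rw [ih hv' hw]

end HeadRedN

/-- One step of weak head reduction, i.e. head reduction that does not go under abstractions. -/
inductive WeakHeadStep : Lam → Lam → Prop
  | appL {u u'} (v) : WeakHeadStep u u' → WeakHeadStep (app u v) (app u' v)
  | beta (u v) : WeakHeadStep (app (abs u) v) (u.subst0 v)

/-- `WeakHeadRedN n u v`: `u` reduces to `v` in exactly `n` weak head steps. -/
inductive WeakHeadRedN : ℕ → Lam → Lam → Prop
  | refl (u) : WeakHeadRedN 0 u u
  | step {n u v w} : WeakHeadStep u v → WeakHeadRedN n v w → WeakHeadRedN (n + 1) u w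

/-- Weak head normal form. -/
def WeakHeadNF (u : Lam) : Prop := ∀ v, ¬ WeakHeadStep u v

/-- Neutral terms `(x)v₁…vₙ`: the weak head normal forms that are not abstractions. -/
inductive Neutral : Lam → Prop
  | var (i) : Neutral (var i)
  | app {u} (v) : Neutral u → Neutral (app u v)

theorem WeakHeadStep.headStep {u v : Lam} (h : WeakHeadStep u v) : HeadStep u v := by
  induction h with
  | beta u v => exact .beta u v
  | appL v h ih => exact .appL v (by cases h <;> exact id) ih

theorem HeadStep.weakHeadStep {u v : Lam} (h : HeadStep u v) (hu : ¬ u.IsAbs) :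
    WeakHeadStep u v := by
  induction h with
  | beta u v => exact .beta u v
  | appL v not_isAbs _ ih => exact .appL v (ih not_isAbs)
  | abs _ _ => exact absurd trivial hu

theorem WeakHeadStep.subst {u v : Lam} (h : WeakHeadStep u v) (σ : ℕ → Lam) :
    WeakHeadStep (u.subst σ) (v.subst σ) := by
  induction h with
  | beta u v =>
    rw [subst_subst0]
    exact .beta _ _
  | appL v _ ih => exact .appL _ ih

namespace WeakHeadRedN

theorem headRedN {n : ℕ} {u v : Lam} (h : WeakHeadRedN n u v) : HeadRedN n u v := by
  induction h with
  | refl u => exact .refl u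
  | step h _ ih => exact .step h.headStep ih

theorem appL {n : ℕ} {u u' : Lam} (h : WeakHeadRedN n u u') (v : Lam) :
    WeakHeadRedN n (app u v) (app u' v) := by
  induction h with
  | refl u => exact .refl _
  | step h _ ih => exact .step (.appL v h) ih

theorem subst {n : ℕ} {u v : Lam} (h : WeakHeadRedN n u v) (σ : ℕ → Lam) :
    WeakHeadRedN n (u.subst σ) (v.subst σ) := by
  induction h with
  | refl u => exact .refl _
  | step h _ ih => exact .step (h.subst σ) ih

end WeakHeadRedN

theorem weakHeadNF_abs (u : Lam) : WeakHeadNF (abs u) := nofun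

theorem Neutral.weakHeadNF {u : Lam} (h : Neutral u) : WeakHeadNF u := by
  induction h with
  | var i => exact nofun
  | app v hu ih =>
    intro w hw
    cases hw with
    | beta => cases hu
    | appL _ hw => exact ih _ hw

theorem Normal.neutral {u : Lam} (h : Normal u) (hu : ¬ u.IsAbs) : Neutral u := by
  induction u with
  | var i => exact .var i
  | abs _ _ => exact absurd trivial hu
  | app u v ih _ => exact .app v (ih h.of_app_left h.not_isAbs_of_app)

/-! ### Splitting left reduction at the weak head normal form -/

theorem LeftStep.beta_step {u v : Lam} (h : LeftStep u v) : Beta u v := by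
  induction h with
  | beta u v => exact .beta u v
  | abs _ ih => exact .abs ih
  | appL v _ _ ih => exact .appL v ih
  | appR u _ _ _ ih => exact .appR u ih

theorem LeftRedN.betaEq {n : ℕ} {u v : Lam} (h : LeftRedN n u v) : BetaEq u v := by
  induction h with
  | refl u => exact .refl u
  | step h _ ih => exact .trans _ _ _ (.rel _ _ h.beta_step) ih

theorem LeftStep.weakHeadStep_or_neutral {u v : Lam} (h : LeftStep u v) (hu : ¬ u.IsAbs) :
    WeakHeadStep u v ∨ Neutral v := by
  induction h with
  | beta u v => exact .inl (.beta u v)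
  | abs _ _ => exact absurd trivial hu
  | appL v not_isAbs _ ih => exact (ih not_isAbs).imp (.appL v) (.app v)
  | appR u not_isAbs hnormal _ _ => exact .inr (.app _ (hnormal.neutral not_isAbs))

/-- `SubtermLeftRed m u v`: `u` and `v` have the same outermost constructor, and each immediate
subterm of `u` left-reduces to the corresponding one of `v` in at most `m` steps. -/
inductive SubtermLeftRed (m : ℕ) : Lam → Lam → Prop
  | var (i) : SubtermLeftRed m (var i) (var i)
  | abs {j u u'} : j ≤ m → LeftRedN j u u' → SubtermLeftRed m (abs u) (abs u')
  | app {i j u u' v v'} : i ≤ m → LeftRedN i u u' → j ≤ m → LeftRedN j v v' →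
      SubtermLeftRed m (app u v) (app u' v')

protected theorem SubtermLeftRed.refl (m : ℕ) (u : Lam) : SubtermLeftRed m u u := by
  cases u with
  | var i => exact .var i
  | abs u => exact .abs m.zero_le (.refl u)
  | app u v => exact .app m.zero_le (.refl u) m.zero_le (.refl v)

theorem LeftStep.weakHeadStep_or_subtermLeftRed {u v : Lam} (h : LeftStep u v) :
    WeakHeadStep u v ∨
      WeakHeadNF v ∧ ∀ {m w}, SubtermLeftRed m v w → SubtermLeftRed (m + 1) u w := by
  cases h with
  | beta u v => exact .inl (.beta u v)
  | abs h =>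
    refine .inr ⟨weakHeadNF_abs _, fun hw => ?_⟩
    cases hw with
    | abs hj hred => exact .abs (by omega) (.step h hred)
  | appL v hu h =>
    refine (h.weakHeadStep_or_neutral hu).imp (.appL v) fun hneutral =>
      ⟨(hneutral.app v).weakHeadNF, fun hw => ?_⟩
    cases hw with
    | app hi hredL hj hredR => exact .app (by omega) (.step h hredL) (by omega) hredR
  | appR u hu hnormal h =>
    refine .inr ⟨((hnormal.neutral hu).app _).weakHeadNF, fun hw => ?_⟩
    cases hw with
    | app hi hredL hj hredR => exact .app (by omega) hredL (by omega) (.step h hredR)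

theorem LeftRedN.exists_weakHeadRedN {k : ℕ} {u w : Lam} (h : LeftRedN k u w) :
    ∃ n m v, n + m = k ∧ WeakHeadRedN n u v ∧ SubtermLeftRed m v w := by
  induction h with
  | refl u => exact ⟨0, 0, u, rfl, .refl u, .refl 0 u⟩
  | @step _ u _ _ hstep _ ih =>
    obtain ⟨n, m, v, rfl, hred, hsub⟩ := ih
    rcases hstep.weakHeadStep_or_subtermLeftRed with hweak | ⟨hnf, hlift⟩
    · exact ⟨n + 1, m, v, by omega, .step hweak hred, hsub⟩
    · cases hred with
      | refl => exact ⟨0, m + 1, u, by omega, .refl u, hlift hsub⟩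
      | step hweak _ => exact absurd hweak (hnf _)

/-! ### Delayed terms and the simulation -/

/-- The term `u` with an identity redex inserted in front of every subterm. -/
def delay : Lam → Lam
  | var i => app (abs (var 0)) (var i)
  | app u v => app (abs (var 0)) (app (delay u) (delay v))
  | abs u => app (abs (var 0)) (abs (delay u))

theorem delay_reflTransGen_beta (u : Lam) : Relation.ReflTransGen Beta (delay u) u := by
  induction u with
  | var i => exact .single (.beta _ _)
  | app u v hu hv =>
    exact .head (.beta _ _) ((hu.lift (app · _) fun _ _ => .appL _).trans
      (hv.lift (app u) fun _ _ => .appR u))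
  | abs u hu => exact .head (.beta _ _) (hu.lift abs fun _ _ => .abs)

theorem delay_betaEq (u : Lam) : BetaEq (delay u) u :=
  Relation.EqvGen.reflTransGen_le_eqvGen _ _ _ (delay_reflTransGen_beta u)

theorem exists_delay_subst_eq (u : Lam) (σ : ℕ → Lam) :
    ∃ v, (delay u).subst σ = app (abs (var 0)) v := by
  cases u <;> exact ⟨_, rfl⟩

theorem not_headNF_delay_subst (u : Lam) (σ : ℕ → Lam) : ¬ HeadNF ((delay u).subst σ) := by
  obtain ⟨v, hv⟩ := exists_delay_subst_eq u σ
  rw [hv]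
  exact fun h => h _ (.beta _ _)

/-- `DelaySim k M M'`: `M'` arises from `M` by replacing some subterms, up to related
substitutions, by the delayed versions of terms to which they left-reduce in at most `k` steps.
The terms related by `box` are given by equations so that `cases` applies to it when `M'` is a
specific term. -/
inductive DelaySim (k : ℕ) : Lam → Lam → Prop
  | var (i) : DelaySim k (var i) (var i)
  | app {u u' v v'} : DelaySim k u u' → DelaySim k v v' → DelaySim k (app u v) (app u' v')
  | abs {u u'} : DelaySim k u u' → DelaySim k (abs u) (abs u')
  | box {j u v M M'} {σ σ' : ℕ → Lam} : j ≤ k → LeftRedN j u v →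
      (∀ i, DelaySim k (σ i) (σ' i)) → M = u.subst σ → M' = (delay v).subst σ' → DelaySim k M M'

namespace DelaySim

variable {k : ℕ}

protected theorem refl (u : Lam) : DelaySim k u u := by
  induction u with
  | var i => exact .var i
  | app _ _ hu hv => exact .app hu hv
  | abs _ hu => exact .abs hu

theorem of_leftRedN {u v : Lam} (h : LeftRedN k u v) : DelaySim k u (delay v) :=
  .box le_rfl h .var (subst_var u).symm (subst_var _).symm

theorem rename {u v : Lam} (h : DelaySim k u v) (ρ : ℕ → ℕ) :
    DelaySim k (u.rename ρ) (v.rename ρ) := by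
  induction h generalizing ρ with
  | var i => exact .var _
  | app _ _ ihu ihv => exact .app (ihu ρ) (ihv ρ)
  | abs _ ih => simpa only [rename_abs] using .abs (ih _)
  | box hj hred _ hM hM' ih =>
    subst hM hM'
    exact .box hj hred (ih · ρ) (rename_subst _ _ _) (rename_subst _ _ _)

theorem liftSub {σ τ : ℕ → Lam} (h : ∀ i, DelaySim k (σ i) (τ i)) (i : ℕ) :
    DelaySim k (Lam.liftSub σ i) (Lam.liftSub τ i) :=
  liftSub_rel (.var 0) (·.rename _) h i

theorem subst {u v : Lam} (h : DelaySim k u v) {σ τ : ℕ → Lam}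
    (hσ : ∀ i, DelaySim k (σ i) (τ i)) : DelaySim k (u.subst σ) (v.subst τ) := by
  induction h generalizing σ τ with
  | var i => exact hσ i
  | app _ _ ihu ihv => exact .app (ihu hσ) (ihv hσ)
  | abs _ ih => exact .abs (ih (liftSub hσ))
  | box hj hred _ hM hM' ih =>
    subst hM hM'
    exact .box hj hred (ih · hσ) (subst_subst _ _ _) (subst_subst _ _ _)

theorem subst0 {u u' v v' : Lam} (hu : DelaySim k u u') (hv : DelaySim k v v') :
    DelaySim k (u.subst0 v) (u'.subst0 v') := by
  simpa only [subst0_eq_subst] using hu.subst (instSub_rel .var hv)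

theorem exists_eq_abs {M u' : Lam} (h : DelaySim k M (Lam.abs u')) :
    ∃ u, M = Lam.abs u ∧ DelaySim k u u' := by
  cases h with
  | abs h => exact ⟨_, rfl, h⟩
  | box _ _ _ _ hM' =>
    obtain ⟨v, hv⟩ := exists_delay_subst_eq _ _
    cases hM'.trans hv

theorem headNF {M M' : Lam} (h : DelaySim k M M') (hM' : HeadNF M') : HeadNF M := by
  induction h with
  | var i => exact headNF_var i
  | abs _ ih => exact headNF_abs_iff.2 (ih (headNF_abs_iff.1 hM'))
  | box _ _ _ _ hbox _ => exact absurd (hbox ▸ hM') (not_headNF_delay_subst _ _)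
  | app hu _ ihu _ =>
    obtain ⟨not_isAbs', hu'⟩ := headNF_app_iff.1 hM'
    refine headNF_app_iff.2 ⟨fun isAbs => ?_, ihu hu'⟩
    cases hu with
    | var _ => exact isAbs
    | app _ _ => exact isAbs
    | abs _ => exact not_isAbs' trivial
    | box _ _ _ _ hbox => exact not_headNF_delay_subst _ _ (hbox ▸ hu')

theorem subst_of_subtermLeftRed {m : ℕ} {u v N' : Lam} {σ σ' : ℕ → Lam} (hm : m ≤ k)
    (h : SubtermLeftRed m u v) (hσ : ∀ i, DelaySim k (σ i) (σ' i))
    (hN' : WeakHeadStep ((delay v).subst σ') N') : DelaySim k (u.subst σ) N' := by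
  cases h with
  | var i =>
    cases hN' with
    | beta => exact hσ i
    | appL _ h => exact absurd h (weakHeadNF_abs _ _)
  | abs hj hred =>
    cases hN' with
    | beta => exact .abs (.box (hj.trans hm) hred (liftSub hσ) rfl rfl)
    | appL _ h => exact absurd h (weakHeadNF_abs _ _)
  | app hi hredL hj hredR =>
    cases hN' with
    | beta =>
      exact .app (.box (hi.trans hm) hredL hσ rfl rfl) (.box (hj.trans hm) hredR hσ rfl rfl)
    | appL _ h => exact absurd h (weakHeadNF_abs _ _)

theorem exists_weakHeadRedN_of_box {j : ℕ} {u v N' : Lam} {σ σ' : ℕ → Lam} (hj : j ≤ k)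
    (hred : LeftRedN j u v) (hσ : ∀ i, DelaySim k (σ i) (σ' i))
    (hN' : WeakHeadStep ((delay v).subst σ') N') :
    ∃ n ≤ k, ∃ N, WeakHeadRedN n (u.subst σ) N ∧ DelaySim k N N' := by
  obtain ⟨n, m, w, rfl, hweak, hsub⟩ := hred.exists_weakHeadRedN
  exact ⟨n, by omega, w.subst σ, hweak.subst σ,
    subst_of_subtermLeftRed (by omega) hsub hσ hN'⟩

theorem exists_weakHeadRedN {M M' N' : Lam} (hM : DelaySim k M M') (h : WeakHeadStep M' N') :
    ∃ n ≤ k + 1, ∃ N, WeakHeadRedN n M N ∧ DelaySim k N N' := by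
  induction h generalizing M with
  | beta u v =>
    cases hM with
    | app hu hv =>
      obtain ⟨u₀, rfl, hu₀⟩ := hu.exists_eq_abs
      exact ⟨1, by omega, _, .step (.beta _ _) (.refl _), hu₀.subst0 hv⟩
    | box hj hred hσ hM hM' =>
      subst hM
      obtain ⟨n, hn, hN⟩ := exists_weakHeadRedN_of_box hj hred hσ (hM' ▸ WeakHeadStep.beta u v)
      exact ⟨n, by omega, hN⟩
  | appL v h ih =>
    cases hM with
    | app hu hv =>
      obtain ⟨n, hn, N, hred, hN⟩ := ih hu
      exact ⟨n, hn, _, hred.appL _, .app hN hv⟩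
    | box hj hred hσ hM hM' =>
      subst hM
      obtain ⟨n, hn, hN⟩ := exists_weakHeadRedN_of_box hj hred hσ (hM' ▸ WeakHeadStep.appL v h)
      exact ⟨n, by omega, hN⟩

theorem exists_headRedN_of_headStep {M M' N' : Lam} (hM : DelaySim k M M') (h : HeadStep M' N') :
    ∃ n ≤ k + 1, ∃ N, HeadRedN n M N ∧ DelaySim k N N' := by
  have of_weakHeadStep {M M' N' : Lam} (hM : DelaySim k M M') (h : WeakHeadStep M' N') :
      ∃ n ≤ k + 1, ∃ N, HeadRedN n M N ∧ DelaySim k N N' := by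
    obtain ⟨n, hn, N, hred, hN⟩ := hM.exists_weakHeadRedN h
    exact ⟨n, hn, N, hred.headRedN, hN⟩
  induction h generalizing M with
  | beta u v => exact of_weakHeadStep hM (.beta u v)
  | appL v not_isAbs h _ => exact of_weakHeadStep hM (.appL v (h.weakHeadStep not_isAbs))
  | abs _ ih =>
    obtain ⟨u, rfl, hu⟩ := hM.exists_eq_abs
    obtain ⟨n, hn, N, hred, hN⟩ := ih hu
    exact ⟨n, hn, _, hred.abs, .abs hN⟩

theorem exists_headRedN {c : ℕ} {M M' N' : Lam} (hM : DelaySim k M M') (h : HeadRedN c M' N') :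
    ∃ n ≤ (k + 1) * c, ∃ N, HeadRedN n M N ∧ DelaySim k N N' := by
  induction h generalizing M with
  | refl u => exact ⟨0, by omega, M, .refl M, hM⟩
  | step hstep _ ih =>
    obtain ⟨n₁, hn₁, N₁, hred₁, hN₁⟩ := hM.exists_headRedN_of_headStep hstep
    obtain ⟨n₂, hn₂, N₂, hred₂, hN₂⟩ := ih hN₁
    exact ⟨n₁ + n₂, by rw [Nat.mul_succ]; omega, N₂, hred₁.trans hred₂, hN₂⟩

theorem headRedN_le {c m : ℕ} {M M' N N' : Lam} (hM : DelaySim k M M')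
    (h' : HeadRedN c M' N') (hN' : HeadNF N') (h : HeadRedN m M N) (hN : HeadNF N) :
    m ≤ (k + 1) * c := by
  obtain ⟨n, hn, L, hred, hL⟩ := hM.exists_headRedN h'
  exact (h.length_unique hN hred (hL.headNF hN')).trans_le hn

end DelaySim

/-- `u` has a head normal form, reached by head reduction. -/
def HasHeadNF (u : Lam) : Prop := ∃ v, HeadRed u v ∧ HeadNF v

theorem IsStorageFor.hasHeadNF {T t θ : Lam} (h : IsStorageFor T t) (hθ : BetaEq θ t) :
    HasHeadNF (app (app T θ) (var 0)) := by
  obtain ⟨_, _, _, hstore⟩ := h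
  obtain ⟨_, _, hred⟩ := hstore θ hθ
  exact ⟨_, hred, headNF_app_iff.2 ⟨id, headNF_var 0⟩⟩

end Lam

open Lam in
theorem stmt10_general (t T f : Lam) (hnt : Normal t)
    (hdelay : HasHeadNF (app (app T (delay t)) f)) :
    ∃ A B : ℕ, ∀ θ : Lam, BetaEq θ t →
      ∀ (k : ℕ) (u : Lam), LeftRedN k θ u → Normal u →
        ∀ (m : ℕ) (w : Lam),
          HeadRedN m (app (app T θ) f) w → HeadNF w →
            m ≤ A * k + B := by
  obtain ⟨w', ⟨c, hred'⟩, hw'⟩ := hdelay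
  refine ⟨c, c, fun θ hθ k u hleft hu m w hred hw => ?_⟩
  obtain rfl : u = t := hu.eq_of_betaEq hnt (.trans _ _ _ (.symm _ _ hleft.betaEq) hθ)
  have hsim : DelaySim k (app (app T θ) f) (app (app T (delay u)) f) :=
    .app (.app (.refl T) (.of_leftRedN hleft)) (.refl f)
  calc m ≤ (k + 1) * c := hsim.headRedN_le hred' hw' hred hw
    _ = c * k + c := by ring

open Lam in
/-- Linear bound on the number of head-reduction steps of `(T)θf` in terms of the
number `N(θ)` of left-reduction steps from `θ` to its normal form. -/
theorem stmt10 (t T : Lam) (ht : Closed t) (hnt : Normal t)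
    (hstor : IsStorageFor T t) :
    ∃ A B : ℕ, ∀ θ : Lam, BetaEq θ t →
      ∀ (k : ℕ) (u : Lam), LeftRedN k θ u → Normal u →
        ∀ (m : ℕ) (w : Lam),
          HeadRedN m (app (app T θ) (var 0)) w → HeadNF w →
            m ≤ A * k + B :=
  stmt10_general t T (var 0) hnt (hstor.hasHeadNF (delay_betaEq t))
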